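/- Let i = i' i_r i_r i_{r+2} i'' with i_r · i_{r+2} = -1 and i_r not adjacent to any entry of i''. Then i has an m-factorization through two copies of the sequence i' i_r i_{r+2} i'' i_r, and consequently if b is the antigravity bound making x_{m-?, i' i_r i_{r+2} i''}^b = 0, then x_{m,i}^b = 0 in R_ν^Λ; moreover the antigravity bounds of i and i' i_r i_{r+2} i'' (related by a stack move) coincide. -/

import Mathlib

namespace KLRPaper


/-- The sequence obtained from `i` by swapping the entries in positions `r` and `r+1`
(0-indexed); identity if `r+1` is out of range. -/
def swapSeq {I : Type} {m : ℕ} (r : ℕ) (i : Fin m → I) : Fin m → I :=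
  fun k =>
    if h : r + 1 < m then
      i (Equiv.swap (⟨r, Nat.lt_of_succ_lt h⟩ : Fin m) (⟨r + 1, h⟩ : Fin m) k)
    else i k

/-- The Khovanov–Lauda–Rouquier algebra of a simply-laced quiver with vertex set `I`
and adjacency relation `adj`, on `m` strands, presented by its generators
(idempotents `e i`, dots `x r i`, crossings `δ r i`) and the KLR relations. -/
structure KLR (I : Type) [DecidableEq I] (adj : I → I → Prop) (m : ℕ)
    (A : Type) [Ring A] where
  e : (Fin m → I) → A
  x : Fin m → (Fin m → I) → A
  δ : ℕ → (Fin m → I) → A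
  e_mul_e : ∀ i j, e i * e j = if i = j then e i else 0
  e_mul_x : ∀ r i, e i * x r i = x r i
  x_mul_e : ∀ r i, x r i * e i = x r i
  x_mul_x : ∀ r s i, x r i * x s i = x s i * x r i
  e_mul_δ : ∀ (r : ℕ) (i : Fin m → I), e (swapSeq r i) * δ r i = δ r i
  δ_mul_e : ∀ (r : ℕ) (i : Fin m → I), δ r i * e i = δ r i
  δδ_same : ∀ (r : ℕ) (h : r + 1 < m) (i : Fin m → I),
    i ⟨r, Nat.lt_of_succ_lt h⟩ = i ⟨r + 1, h⟩ →
    δ r (swapSeq r i) * δ r i = 0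
  δδ_orth : ∀ (r : ℕ) (h : r + 1 < m) (i : Fin m → I),
    i ⟨r, Nat.lt_of_succ_lt h⟩ ≠ i ⟨r + 1, h⟩ →
    ¬ adj (i ⟨r, Nat.lt_of_succ_lt h⟩) (i ⟨r + 1, h⟩) →
    δ r (swapSeq r i) * δ r i = e i
  δδ_adj : ∀ (r : ℕ) (h : r + 1 < m) (i : Fin m → I),
    adj (i ⟨r, Nat.lt_of_succ_lt h⟩) (i ⟨r + 1, h⟩) →
    δ r (swapSeq r i) * δ r i = x ⟨r, Nat.lt_of_succ_lt h⟩ i + x ⟨r + 1, h⟩ i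
  δx_far : ∀ (r : ℕ) (s : Fin m) (i : Fin m → I), s.val ≠ r → s.val ≠ r + 1 →
    δ r i * x s i = x s (swapSeq r i) * δ r i
  δx_diff1 : ∀ (r : ℕ) (h : r + 1 < m) (i : Fin m → I),
    i ⟨r, Nat.lt_of_succ_lt h⟩ ≠ i ⟨r + 1, h⟩ →
    δ r i * x ⟨r, Nat.lt_of_succ_lt h⟩ i = x ⟨r + 1, h⟩ (swapSeq r i) * δ r i
  δx_diff2 : ∀ (r : ℕ) (h : r + 1 < m) (i : Fin m → I),
    i ⟨r, Nat.lt_of_succ_lt h⟩ ≠ i ⟨r + 1, h⟩ →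
    δ r i * x ⟨r + 1, h⟩ i = x ⟨r, Nat.lt_of_succ_lt h⟩ (swapSeq r i) * δ r i
  δx_same1 : ∀ (r : ℕ) (h : r + 1 < m) (i : Fin m → I),
    i ⟨r, Nat.lt_of_succ_lt h⟩ = i ⟨r + 1, h⟩ →
    δ r i * x ⟨r, Nat.lt_of_succ_lt h⟩ i - x ⟨r + 1, h⟩ (swapSeq r i) * δ r i = e i
  δx_same2 : ∀ (r : ℕ) (h : r + 1 < m) (i : Fin m → I),
    i ⟨r, Nat.lt_of_succ_lt h⟩ = i ⟨r + 1, h⟩ →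
    x ⟨r, Nat.lt_of_succ_lt h⟩ (swapSeq r i) * δ r i - δ r i * x ⟨r + 1, h⟩ i = e i
  braid_easy : ∀ (r : ℕ) (h : r + 2 < m) (i : Fin m → I),
    ¬ (i ⟨r, by omega⟩ = i ⟨r + 2, h⟩ ∧ adj (i ⟨r, by omega⟩) (i ⟨r + 1, by omega⟩)) →
    δ r (swapSeq (r + 1) (swapSeq r i)) * δ (r + 1) (swapSeq r i) * δ r i =
      δ (r + 1) (swapSeq r (swapSeq (r + 1) i)) * δ r (swapSeq (r + 1) i) * δ (r + 1) i
  braid_hard : ∀ (r : ℕ) (h : r + 2 < m) (i : Fin m → I),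
    i ⟨r, by omega⟩ = i ⟨r + 2, h⟩ → adj (i ⟨r, by omega⟩) (i ⟨r + 1, by omega⟩) →
    δ r (swapSeq (r + 1) (swapSeq r i)) * δ (r + 1) (swapSeq r i) * δ r i -
      δ (r + 1) (swapSeq r (swapSeq (r + 1) i)) * δ r (swapSeq (r + 1) i) * δ (r + 1) i
      = e i

/-- The cyclotomic quotient `R_ν^Λ` of the KLR algebra at the dominant weight
`Λ = Σ λ_i · i` (a finitely supported function `I →₀ ℕ`): it additionally satisfies
`x_{1,i}^{λ_{i₁}} 1_i = 0` for every sequence `i`. -/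
structure CycKLR (I : Type) [DecidableEq I] (adj : I → I → Prop) (m : ℕ)
    (A : Type) [Ring A] (Λ : I →₀ ℕ) extends KLR I adj m A where
  cyc : ∀ (h : 0 < m) (i : Fin m → I), x ⟨0, h⟩ i ^ Λ (i ⟨0, h⟩) * e i = 0



/-- `i` has an `r`-factorization through the finite family of sequences `j a`
(with the `r`-th strand of `i` occurring at position `t a` of `j a`): the
idempotent `1_i` factors as `Σ_a u_a v_a` where `u_a ∈ 1_i A 1_{j_a}` and
`v_a ∈ 1_{j_a} A 1_i` are built from the minimal diagrams `(_{i}1_{j_a})` and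
`(_{j_a}1_{i})` bordered by elements of `R_{i',i_r,i'''}`, so that the dot on the
`r`-th strand of `i` slides through them onto the `t a`-th strand of `j a`. -/
def RFactorization {I : Type} [DecidableEq I] {adj : I → I → Prop} {m : ℕ}
    {A : Type} [Ring A] (K : KLR I adj m A) (i : Fin m → I) (r : Fin m)
    {n : ℕ} (j : Fin n → (Fin m → I)) (t : Fin n → Fin m) : Prop :=
  ∃ u v : Fin n → A,
    (∀ a, u a = K.e i * u a * K.e (j a)) ∧
    (∀ a, v a = K.e (j a) * v a * K.e i) ∧
    (∀ a, K.x r i * u a = u a * K.x (t a) (j a)) ∧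
    (∀ a, K.x (t a) (j a) * v a = v a * K.x r i) ∧
    K.e i = ∑ a, u a * v a


/-- Adjacency for the type `A_∞` quiver with vertex set `ℤ`. -/
def adjZ (u v : ℤ) : Prop := (u - v).natAbs = 1

/-- The heap covering relation for the bead-and-runner diagram of the sequence `l`
(type `A_∞`): bead `a` is directly below bead `b` if it was placed earlier and its
runner is at distance at most one from the runner of `b`. -/
def HeapRel (l : List ℤ) (a b : ℕ) : Prop :=
  a < b ∧ b < l.length ∧ (l.getD a 0 - l.getD b 0).natAbs ≤ 1

/-- Bead `k` is trapped below the anchored bead `r` in antigravity: there is a chain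
of beads from `k` up to `r`, each step going to a later bead on the same or an
adjacent runner. -/
def Trapped (l : List ℤ) (r k : ℕ) : Prop :=
  Relation.ReflTransGen (HeapRel l) k r

open Classical in
/-- The support of the `r`-stable antigravity configuration `a_r(l)`: the set of
runners carrying a bead trapped below the anchored bead `r`. -/
noncomputable def trappedRunners (l : List ℤ) (r : ℕ) : Finset ℤ :=
  ((Finset.range l.length).filter fun k => Trapped l r k).image fun k => l.getD k 0

/-- The `r`-antigravity bound `b_r = Σ_{j ∈ Supp(a_r(l))} λ_j`. -/
noncomputable def agBound (Λ : ℤ →₀ ℕ) (l : List ℤ) (r : ℕ) : ℕ :=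
  ∑ j ∈ trappedRunners l r, Λ j


/-- The sequence `i' i_r i_{r+2} i'' i_r`: the upper of the two stacked strands
`i_r i_r` is pulled to the far right past `i_{r+2}` and `i''`. -/
def stackPull {m : ℕ} (r : ℕ) (hr : r + 1 < m) (q : Fin m → ℤ) :
    Fin m → ℤ := fun k =>
  if k.val ≤ r then q k
  else if h : k.val + 1 < m then q ⟨k.val + 1, h⟩
  else q ⟨r, by omega⟩

/-!
Write `d` for the crossing of the two equal strands `i_r i_r`, and `y` for the dot on `i_{r+2}`.
Because `d² = 0`, the dot relations give `1_i = (x_r + y) d - d (x_{r+1} + y)` and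
`d (x_{r+1} + y) d = -d`. The sum `x_{r+1} + y` is a double crossing of the adjacent strands
`i_r i_{r+2}`, so both terms factor through the sequence with `i_{r+2}` between the two copies of
`i_r`. The right-hand copy can then be pulled to the far right, since a double crossing of
orthogonal strands is the identity. Every element used lets the last dot slide through it.

Deleting the upper of two stacked beads does not change the set of runners trapped below a later
bead: the map merging the two beads and the map skipping the upper one are monotone and preserve
runners, so each of them carries chains in one heap to chains in the other.
-/

section Sequences

/-- The transposition of the adjacent positions `r` and `r + 1`, which is the permutation of
positions effected by the crossing `δ r`. -/
abbrev simpleSwap {m : ℕ} (r : ℕ) (h : r + 1 < m) : Equiv.Perm (Fin m) :=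
  Equiv.swap ⟨r, Nat.lt_of_succ_lt h⟩ ⟨r + 1, h⟩

variable {I : Type} {m : ℕ}

theorem swapSeq_eq_comp_simpleSwap (r : ℕ) (h : r + 1 < m) (i : Fin m → I) :
    swapSeq r i = i ∘ simpleSwap r h := by
  funext k
  exact dif_pos h

theorem swapSeq_involutive (r : ℕ) : Function.Involutive (swapSeq r : (Fin m → I) → Fin m → I) := by
  intro i
  by_cases h : r + 1 < m
  · funext k
    simp only [swapSeq_eq_comp_simpleSwap r h, Function.comp_apply, Equiv.swap_apply_self]
  · funext k
    simp only [swapSeq, dif_neg h]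

theorem swapSeq_eq_self (r : ℕ) (h : r + 1 < m) (i : Fin m → I)
    (hi : i ⟨r, Nat.lt_of_succ_lt h⟩ = i ⟨r + 1, h⟩) : swapSeq r i = i := by
  funext k
  rw [swapSeq_eq_comp_simpleSwap r h, Function.comp_apply, Equiv.swap_apply_def]
  split_ifs with h₁ h₂
  · rw [h₁, hi]
  · rw [h₂, hi]
  · rfl

theorem val_cycleIcc {a b : Fin m} (hab : a ≤ b) (k : Fin m) :
    (Fin.cycleIcc a b k).val =
      if k < a then k.val else if k < b then k.val + 1 else if k = b then a.val else k.val := by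
  have : NeZero m := ⟨k.pos.ne'⟩
  split_ifs with h₁ h₂ h₃
  · rw [Fin.cycleIcc_of_lt h₁]
  · rw [Fin.cycleIcc_of_ge_of_lt (not_lt.mp h₁) h₂, Fin.val_add_one_of_lt' (by omega)]
  · rw [h₃, Fin.cycleIcc_of_last hab]
  · rw [Fin.cycleIcc_of_gt (by omega)]

theorem simpleSwap_eq_cycleIcc (r : ℕ) (h : r + 1 < m) :
    simpleSwap r h = Fin.cycleIcc ⟨r, Nat.lt_of_succ_lt h⟩ ⟨r + 1, h⟩ := by
  ext k
  rw [val_cycleIcc (by simp), Equiv.swap_apply_def]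
  grind

theorem cycleIcc_mul_cycleIcc {a b c : Fin m} (hab : a ≤ b) (hbc : b ≤ c) :
    Fin.cycleIcc a b * Fin.cycleIcc b c = Fin.cycleIcc a c :=
  have : NeZero m := ⟨a.pos.ne'⟩
  DFunLike.coe_injective (Fin.cycleIcc.trans hab hbc)

theorem cycleIcc_inv_last_of_lt (a : ℕ) (h : a + 1 < m) :
    (Fin.cycleIcc (⟨a, by omega⟩ : Fin m) ⟨m - 1, by omega⟩)⁻¹ ⟨m - 1, by omega⟩ =
      ⟨m - 2, by omega⟩ := by
  rw [Equiv.Perm.inv_eq_iff_eq, Fin.ext_iff, val_cycleIcc (Fin.mk_le_mk.mpr (by omega))]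
  simp only [Fin.lt_def, Fin.ext_iff]
  split_ifs <;> omega

theorem stackPull_eq_comp_cycleIcc (r : ℕ) (h : r + 1 < m) (q : Fin m → ℤ)
    (hrr : q ⟨r, by omega⟩ = q ⟨r + 1, h⟩) :
    stackPull r h q = q ∘ Fin.cycleIcc ⟨r + 1, h⟩ ⟨m - 1, by omega⟩ := by
  funext k
  have hval := val_cycleIcc (a := ⟨r + 1, h⟩) (b := ⟨m - 1, by omega⟩)
    (Fin.mk_le_mk.mpr (by omega)) k
  simp only [Fin.lt_def, Fin.ext_iff] at hval
  unfold stackPull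
  split_ifs with hk hk'
  · exact congrArg q (Fin.ext (by grind))
  · exact congrArg q (Fin.ext (by grind))
  · rw [hrr]
    exact congrArg q (Fin.ext (by grind))

end Sequences

theorem stack_idempotent_decomposition {R : Type*} [Ring R] {e d x₁ x₂ y : R}
    (hdd : d * d = 0) (hed : e * d = d) (hx : x₁ * d - d * x₂ = e) (hy : d * y = y * d) :
    e = -((x₁ + y) * d * (x₂ + y) * d) + -(d * (x₂ + y)) := by
  have hdx : d * (x₂ + y) = (x₁ + y) * d - e := by rw [mul_add, hy, ← hx]; noncomm_ring
  have hdxd : d * (x₂ + y) * d = -d := by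
    rw [hdx, sub_mul, mul_assoc, hdd, mul_zero, hed, zero_sub]
  calc e = (x₁ + y) * d + -(d * (x₂ + y)) := by rw [hdx]; abel
    _ = -((x₁ + y) * (d * (x₂ + y) * d)) + -(d * (x₂ + y)) := by rw [hdxd, mul_neg, neg_neg]
    _ = -((x₁ + y) * d * (x₂ + y) * d) + -(d * (x₂ + y)) := by simp only [mul_assoc]

namespace KLR

variable {I : Type} [DecidableEq I] {adj : I → I → Prop} {m : ℕ} {A : Type} [Ring A]

/-- `u ∈ 1_i A 1_j` intertwines the dot on strand `s` of `i` with the dot on strand `t` of `j`.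
These are the conditions an `RFactorization` imposes on each of its factors. -/
structure DotSlide (K : KLR I adj m A) (i : Fin m → I) (s : Fin m) (j : Fin m → I) (t : Fin m)
    (u : A) : Prop where
  e_mul : K.e i * u = u
  mul_e : u * K.e j = u
  x_mul : K.x s i * u = u * K.x t j

variable {K : KLR I adj m A} {i j k : Fin m → I} {s t p : Fin m} {u v : A}

theorem e_mul_self (K : KLR I adj m A) (i : Fin m → I) : K.e i * K.e i = K.e i := by
  rw [K.e_mul_e, if_pos rfl]

namespace DotSlide

theorem idem (K : KLR I adj m A) (i : Fin m → I) (s : Fin m) : K.DotSlide i s i s (K.e i) where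
  e_mul := K.e_mul_self i
  mul_e := K.e_mul_self i
  x_mul := by rw [K.x_mul_e, K.e_mul_x]

theorem dot (K : KLR I adj m A) (i : Fin m → I) (s p : Fin m) : K.DotSlide i s i s (K.x p i) where
  e_mul := K.e_mul_x p i
  mul_e := K.x_mul_e p i
  x_mul := K.x_mul_x s p i

theorem mul (hu : K.DotSlide i s j t u) (hv : K.DotSlide j t k p v) :
    K.DotSlide i s k p (u * v) where
  e_mul := by rw [← mul_assoc, hu.e_mul]
  mul_e := by rw [mul_assoc, hv.mul_e]
  x_mul := by rw [← mul_assoc, hu.x_mul, mul_assoc, hv.x_mul, mul_assoc]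

theorem add (hu : K.DotSlide i s j t u) (hv : K.DotSlide i s j t v) :
    K.DotSlide i s j t (u + v) where
  e_mul := by rw [mul_add, hu.e_mul, hv.e_mul]
  mul_e := by rw [add_mul, hu.mul_e, hv.mul_e]
  x_mul := by rw [mul_add, add_mul, hu.x_mul, hv.x_mul]

theorem neg (hu : K.DotSlide i s j t u) : K.DotSlide i s j t (-u) where
  e_mul := by rw [mul_neg, hu.e_mul]
  mul_e := by rw [neg_mul, hu.mul_e]
  x_mul := by rw [mul_neg, neg_mul, hu.x_mul]

theorem x_pow_mul (hu : K.DotSlide i s j t u) (b : ℕ) : K.x s i ^ b * u = u * K.x t j ^ b :=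
  (SemiconjBy.pow_right (a := u) hu.x_mul.symm b).symm

theorem crossing_far (K : KLR I adj m A) (r : ℕ) (i : Fin m → I) (s : Fin m)
    (hs : s.val ≠ r) (hs' : s.val ≠ r + 1) : K.DotSlide (swapSeq r i) s i s (K.δ r i) where
  e_mul := K.e_mul_δ r i
  mul_e := K.δ_mul_e r i
  x_mul := (K.δx_far r s i hs hs').symm

theorem crossing_of_ne (K : KLR I adj m A) (r : ℕ) (h : r + 1 < m) (i : Fin m → I)
    (hne : i ⟨r, Nat.lt_of_succ_lt h⟩ ≠ i ⟨r + 1, h⟩) (s : Fin m) :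
    K.DotSlide (swapSeq r i) (simpleSwap r h s) i s (K.δ r i) where
  e_mul := K.e_mul_δ r i
  mul_e := K.δ_mul_e r i
  x_mul := by
    rw [Equiv.swap_apply_def]
    split_ifs with h₁ h₂
    · rw [h₁, K.δx_diff1 r h i hne]
    · rw [h₂, K.δx_diff2 r h i hne]
    · exact (K.δx_far r s i (by simpa [Fin.ext_iff] using h₁)
        (by simpa [Fin.ext_iff] using h₂)).symm

theorem crossing_symm_of_ne (K : KLR I adj m A) (r : ℕ) (h : r + 1 < m) (i : Fin m → I)
    (hne : i ⟨r, Nat.lt_of_succ_lt h⟩ ≠ i ⟨r + 1, h⟩) (s : Fin m) :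
    K.DotSlide i s (swapSeq r i) (simpleSwap r h s) (K.δ r (swapSeq r i)) := by
  have hne' : swapSeq r i ⟨r, Nat.lt_of_succ_lt h⟩ ≠ swapSeq r i ⟨r + 1, h⟩ := by
    rw [swapSeq_eq_comp_simpleSwap r h, Function.comp_apply, Function.comp_apply,
      Equiv.swap_apply_left, Equiv.swap_apply_right]
    exact hne.symm
  have hslide := crossing_of_ne K r h (swapSeq r i) hne' (simpleSwap r h s)
  rwa [swapSeq_involutive, Equiv.swap_apply_self] at hslide

end DotSlide

variable {n : ℕ} {f : Fin n → Fin m → I} {τ : Fin n → Fin m}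

theorem rFactorization_iff_exists_dotSlide :
    RFactorization K i s f τ ↔
      ∃ u v : Fin n → A, (∀ a, K.DotSlide i s (f a) (τ a) (u a)) ∧
        (∀ a, K.DotSlide (f a) (τ a) i s (v a)) ∧ K.e i = ∑ a, u a * v a := by
  have of_sandwich {i j : Fin m → I} {s t : Fin m} {u : A} (he : u = K.e i * u * K.e j)
      (hx : K.x s i * u = u * K.x t j) : K.DotSlide i s j t u :=
    ⟨by rw [he, ← mul_assoc, ← mul_assoc, K.e_mul_self],
      by rw [he, mul_assoc, K.e_mul_self], hx⟩
  constructor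
  · rintro ⟨u, v, hu, hv, hxu, hxv, hsum⟩
    exact ⟨u, v, fun a ↦ of_sandwich (hu a) (hxu a), fun a ↦ of_sandwich (hv a) (hxv a), hsum⟩
  · rintro ⟨u, v, hu, hv, hsum⟩
    exact ⟨u, v, fun a ↦ by rw [(hu a).e_mul, (hu a).mul_e],
      fun a ↦ by rw [(hv a).e_mul, (hv a).mul_e], fun a ↦ (hu a).x_mul, fun a ↦ (hv a).x_mul, hsum⟩

theorem rFactorization_single_iff_exists_dotSlide :
    RFactorization K i s (fun _ : Fin 1 ↦ j) (fun _ ↦ t) ↔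
      ∃ u v : A, K.DotSlide i s j t u ∧ K.DotSlide j t i s v ∧ K.e i = u * v := by
  rw [rFactorization_iff_exists_dotSlide]
  constructor
  · rintro ⟨u, v, hu, hv, hsum⟩
    exact ⟨u 0, v 0, hu 0, hv 0, by rw [hsum, Fin.sum_univ_one]⟩
  · rintro ⟨u, v, hu, hv, hmul⟩
    exact ⟨fun _ ↦ u, fun _ ↦ v, fun _ ↦ hu, fun _ ↦ hv, by rw [hmul, Fin.sum_univ_one]⟩

theorem rFactorization_refl (K : KLR I adj m A) (i : Fin m → I) (s : Fin m) :
    RFactorization K i s (fun _ : Fin 1 ↦ i) (fun _ ↦ s) :=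
  rFactorization_single_iff_exists_dotSlide.mpr
    ⟨K.e i, K.e i, .idem K i s, .idem K i s, (K.e_mul_self i).symm⟩

theorem rFactorization_trans {g : Fin n → Fin m → I} {ρ : Fin n → Fin m}
    (hf : RFactorization K i s f τ)
    (hg : ∀ a, RFactorization K (f a) (τ a) (fun _ : Fin 1 ↦ g a) (fun _ ↦ ρ a)) :
    RFactorization K i s g ρ := by
  obtain ⟨u, v, hu, hv, hsum⟩ := rFactorization_iff_exists_dotSlide.mp hf
  choose u' v' hu' hv' hmul using fun a ↦ rFactorization_single_iff_exists_dotSlide.mp (hg a)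
  refine rFactorization_iff_exists_dotSlide.mpr ⟨fun a ↦ u a * u' a, fun a ↦ v' a * v a,
    fun a ↦ (hu a).mul (hu' a), fun a ↦ (hv' a).mul (hv a), ?_⟩
  calc K.e i = ∑ a, u a * v a := hsum
    _ = ∑ a, u a * K.e (f a) * v a := by simp only [(hu _).mul_e]
    _ = ∑ a, u a * u' a * (v' a * v a) := by simp only [hmul, mul_assoc]

theorem x_pow_mul_e_eq_zero_of_rFactorization (hf : RFactorization K i s f τ) {b : ℕ}
    (hb : ∀ a, K.x (τ a) (f a) ^ b * K.e (f a) = 0) : K.x s i ^ b * K.e i = 0 := by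
  obtain ⟨u, v, hu, hv, hsum⟩ := rFactorization_iff_exists_dotSlide.mp hf
  calc K.x s i ^ b * K.e i = ∑ a, K.x s i ^ b * (u a * v a) := by rw [hsum, Finset.mul_sum]
    _ = ∑ a, u a * (K.x (τ a) (f a) ^ b * K.e (f a)) * v a := by
      refine Finset.sum_congr rfl fun a _ ↦ ?_
      rw [← mul_assoc, (hu a).x_pow_mul, ← mul_assoc, mul_assoc _ (K.e (f a)), (hv a).e_mul]
    _ = 0 := by simp only [hb, mul_zero, zero_mul, Finset.sum_const_zero]

theorem rFactorization_crossing_of_orthogonal (K : KLR I adj m A) (r : ℕ) (h : r + 1 < m)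
    (i : Fin m → I) (hne : i ⟨r, Nat.lt_of_succ_lt h⟩ ≠ i ⟨r + 1, h⟩)
    (hadj : ¬ adj (i ⟨r, Nat.lt_of_succ_lt h⟩) (i ⟨r + 1, h⟩)) (s : Fin m) :
    RFactorization K i s (fun _ : Fin 1 ↦ swapSeq r i) (fun _ ↦ simpleSwap r h s) :=
  rFactorization_single_iff_exists_dotSlide.mpr ⟨_, _, .crossing_symm_of_ne K r h i hne s,
    .crossing_of_ne K r h i hne s, (K.δδ_orth r h i hne hadj).symm⟩

theorem rFactorization_pull_of_orthogonal (K : KLR I adj m A) (i : Fin m → I) (s : Fin m)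
    (a b : ℕ) (hab : a ≤ b) (hb : b < m)
    (horth : ∀ k : Fin m, a < k.val → k.val ≤ b →
      i ⟨a, by omega⟩ ≠ i k ∧ ¬ adj (i ⟨a, by omega⟩) (i k)) :
    RFactorization K i s (fun _ : Fin 1 ↦ i ∘ Fin.cycleIcc ⟨a, by omega⟩ ⟨b, hb⟩)
      (fun _ ↦ (Fin.cycleIcc ⟨a, by omega⟩ ⟨b, hb⟩)⁻¹ s) := by
  have : NeZero m := ⟨s.pos.ne'⟩
  induction b, hab using Nat.le_induction with
  | base => simpa only [Fin.cycleIcc_eq, inv_one, Equiv.Perm.one_apply, Equiv.Perm.coe_one,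
      Function.comp_id] using rFactorization_refl K i s
  | succ b hab ih =>
    set c := Fin.cycleIcc (⟨a, by omega⟩ : Fin m) ⟨b, by omega⟩
    have hcycle : Fin.cycleIcc ⟨a, by omega⟩ ⟨b + 1, hb⟩ = c * simpleSwap b hb := by
      rw [simpleSwap_eq_cycleIcc, cycleIcc_mul_cycleIcc hab (by simp)]
    have hc_left : c ⟨b, by omega⟩ = ⟨a, by omega⟩ := Fin.cycleIcc_of_last hab
    have hc_right : c ⟨b + 1, hb⟩ = ⟨b + 1, hb⟩ := Fin.cycleIcc_of_gt (by simp)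
    obtain ⟨hne, hadj⟩ := horth ⟨b + 1, hb⟩ (by simp only; omega) le_rfl
    rw [← hc_left, ← hc_right] at hne hadj
    have hcross := rFactorization_crossing_of_orthogonal K b hb (i ∘ c) hne hadj (c⁻¹ s)
    rw [swapSeq_eq_comp_simpleSwap b hb] at hcross
    rw [hcycle, mul_inv_rev, Equiv.swap_inv]
    exact rFactorization_trans
      (ih (by omega) fun k hak hkb ↦ horth k hak (by omega)) fun _ ↦ hcross

theorem rFactorization_iij_iji (K : KLR I adj m A) (i : Fin m → I) (r : ℕ) (h : r + 2 < m)
    (heq : i ⟨r, by omega⟩ = i ⟨r + 1, by omega⟩)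
    (hne : i ⟨r + 1, by omega⟩ ≠ i ⟨r + 2, h⟩)
    (hadj : adj (i ⟨r + 1, by omega⟩) (i ⟨r + 2, h⟩))
    (s : Fin m) (hs : s.val ≠ r) (hs' : s.val ≠ r + 1) :
    RFactorization K i s (fun _ : Fin 2 ↦ swapSeq (r + 1) i)
      (fun _ ↦ simpleSwap (r + 1) h s) := by
  have hswap : swapSeq r i = i := swapSeq_eq_self r (by omega) i heq
  set d := K.δ r i
  set F := K.δ (r + 1) i
  set G := K.δ (r + 1) (swapSeq (r + 1) i)
  set x₁ := K.x ⟨r, by omega⟩ i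
  set x₂ := K.x ⟨r + 1, by omega⟩ i
  set y := K.x ⟨r + 2, h⟩ i
  have hd : K.DotSlide i s i s d := by
    simpa only [hswap] using DotSlide.crossing_far K r i s hs hs'
  have hF : K.DotSlide (swapSeq (r + 1) i) (simpleSwap (r + 1) h s) i s F :=
    .crossing_of_ne K (r + 1) h i hne s
  have hG : K.DotSlide i s (swapSeq (r + 1) i) (simpleSwap (r + 1) h s) G :=
    .crossing_symm_of_ne K (r + 1) h i hne s
  have hxy : K.DotSlide i s i s (x₁ + y) := (DotSlide.dot K i s _).add (.dot K i s _)
  have hGF : G * F = x₂ + y := K.δδ_adj (r + 1) h i hadj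
  have hdd : d * d = 0 := by simpa only [hswap] using K.δδ_same r (by omega) i heq
  have hx : x₁ * d - d * x₂ = K.e i := by
    simpa only [hswap] using K.δx_same2 r (by omega) i heq
  have hy : d * y = y * d := by
    simpa only [hswap] using K.δx_far r ⟨r + 2, h⟩ i (by simp) (by simp)
  refine rFactorization_iff_exists_dotSlide.mpr
    ⟨![-((x₁ + y) * d * G), -(d * G)], ![F * d, F], ?_, ?_, ?_⟩
  · exact Fin.forall_fin_two.mpr ⟨((hxy.mul hd).mul hG).neg, (hd.mul hG).neg⟩
  · exact Fin.forall_fin_two.mpr ⟨hF.mul hd, hF⟩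
  · rw [stack_idempotent_decomposition hdd hd.e_mul hx hy, Fin.sum_univ_two, ← hGF]
    simp only [Matrix.cons_val_zero, Matrix.cons_val_one, neg_mul, mul_assoc]

theorem rFactorization_stack_pull (K : KLR I adj m A) (i : Fin m → I) (r b : ℕ) (hrb : r + 2 ≤ b)
    (hb : b < m) (heq : i ⟨r, by omega⟩ = i ⟨r + 1, by omega⟩)
    (hne : i ⟨r + 1, by omega⟩ ≠ i ⟨r + 2, by omega⟩)
    (hadj : adj (i ⟨r + 1, by omega⟩) (i ⟨r + 2, by omega⟩))
    (horth : ∀ k : Fin m, r + 2 < k.val → k.val ≤ b →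
      i ⟨r + 1, by omega⟩ ≠ i k ∧ ¬ adj (i ⟨r + 1, by omega⟩) (i k))
    (s : Fin m) (hs : s.val ≠ r) (hs' : s.val ≠ r + 1) :
    RFactorization K i s (fun _ : Fin 2 ↦ i ∘ Fin.cycleIcc ⟨r + 1, by omega⟩ ⟨b, hb⟩)
      (fun _ ↦ (Fin.cycleIcc ⟨r + 1, by omega⟩ ⟨b, hb⟩)⁻¹ s) := by
  have h : r + 2 < m := by omega
  set σ := simpleSwap (r + 1) h
  have hcycle : Fin.cycleIcc ⟨r + 1, by omega⟩ ⟨b, hb⟩ =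
      σ * Fin.cycleIcc ⟨r + 2, h⟩ ⟨b, hb⟩ := by
    rw [show σ = _ from simpleSwap_eq_cycleIcc (r + 1) h, cycleIcc_mul_cycleIcc (by simp) hrb]
  have hσ_left : σ ⟨r + 2, h⟩ = ⟨r + 1, by omega⟩ := Equiv.swap_apply_right _ _
  have hσ_tail (k : Fin m) (hk : r + 2 < k.val) : σ k = k :=
    Equiv.swap_apply_of_ne_of_ne (by simp only [ne_eq, Fin.ext_iff]; omega)
      (by simp only [ne_eq, Fin.ext_iff]; omega)
  have hpull := rFactorization_pull_of_orthogonal K (i ∘ σ) (σ s) (r + 2) b hrb hb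
    fun k hk hkb ↦ by
      simpa only [Function.comp_apply, hσ_left, hσ_tail k hk] using horth k hk hkb
  have hiij := rFactorization_iij_iji K i r h heq hne hadj s hs hs'
  rw [swapSeq_eq_comp_simpleSwap (r + 1) h] at hiij
  rw [hcycle, mul_inv_rev, Equiv.swap_inv]
  exact rFactorization_trans hiij fun _ ↦ hpull

end KLR

section Antigravity

theorem mem_trappedRunners {l : List ℤ} {n : ℕ} {z : ℤ} :
    z ∈ trappedRunners l n ↔ ∃ k < l.length, Trapped l n k ∧ l.getD k 0 = z := by
  simp only [trappedRunners, Finset.mem_image, Finset.mem_filter, Finset.mem_range, and_assoc]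

theorem trappedRunners_subset_of_monotone {l l' : List ℤ} {f : ℕ → ℕ} (hf : Monotone f)
    (hlength : ∀ k < l.length, f k < l'.length) (hgetD : ∀ k, l'.getD (f k) 0 = l.getD k 0)
    (n : ℕ) : trappedRunners l n ⊆ trappedRunners l' (f n) := by
  have hlift {a b : ℕ} (hab : HeapRel l a b) :
      Relation.ReflTransGen (HeapRel l') (f a) (f b) := by
    obtain ⟨hlt, hb, hdist⟩ := hab
    rcases (hf hlt.le).eq_or_lt with hfab | hfab
    · rw [hfab]
    · exact .single ⟨hfab, hlength b hb, by rwa [hgetD, hgetD]⟩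
  intro z hz
  obtain ⟨k, hk, htrapped, rfl⟩ := mem_trappedRunners.mp hz
  exact mem_trappedRunners.mpr
    ⟨f k, hlength k hk, htrapped.lift' f fun _ _ ↦ hlift, hgetD k⟩

theorem getD_eraseIdx {α : Type*} (l : List α) (j k : ℕ) (z : α) :
    (l.eraseIdx j).getD k z = l.getD (if k < j then k else k + 1) z := by
  simp only [List.getD_eq_getElem?_getD, List.getElem?_eraseIdx]
  split_ifs <;> rfl

theorem trappedRunners_eraseIdx_subset (l : List ℤ) {j n : ℕ} (hjn : j ≤ n) :
    trappedRunners (l.eraseIdx j) n ⊆ trappedRunners l (n + 1) := by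
  have hmono : Monotone fun k ↦ if k < j then k else k + 1 := by
    intro a b hab
    grind
  have hsubset := trappedRunners_subset_of_monotone hmono
    (fun k hk ↦ by rw [List.length_eraseIdx] at hk; grind)
    (fun k ↦ (getD_eraseIdx l j k 0).symm) n
  rwa [if_neg (not_lt.mpr hjn)] at hsubset

theorem trappedRunners_subset_eraseIdx (l : List ℤ) {r n : ℕ}
    (hstack : l.getD r 0 = l.getD (r + 1) 0) (hrn : r ≤ n) :
    trappedRunners l (n + 1) ⊆ trappedRunners (l.eraseIdx (r + 1)) n := by
  have hmono : Monotone fun k ↦ if k ≤ r then k else k - 1 := by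
    intro a b hab
    grind
  have hsubset := trappedRunners_subset_of_monotone hmono
    (l := l) (l' := l.eraseIdx (r + 1))
    (fun k hk ↦ by rw [List.length_eraseIdx]; grind)
    (fun k ↦ by rw [getD_eraseIdx]; grind) (n + 1)
  rwa [if_neg (by omega), Nat.add_sub_cancel] at hsubset

theorem agBound_eraseIdx_of_stack (Λ : ℤ →₀ ℕ) (l : List ℤ) {r n : ℕ}
    (hstack : l.getD r 0 = l.getD (r + 1) 0) (hrn : r < n) :
    agBound Λ (l.eraseIdx (r + 1)) n = agBound Λ l (n + 1) := by
  rw [agBound, agBound, (trappedRunners_eraseIdx_subset l hrn).antisymm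
    (trappedRunners_subset_eraseIdx l hstack hrn.le)]

end Antigravity

theorem rFactorization_stackPull {m : ℕ} {A : Type} [Ring A] (K : KLR ℤ adjZ m A) (q : Fin m → ℤ)
    (r : ℕ) (hm : r + 2 < m)
    (hrr : q ⟨r, by omega⟩ = q ⟨r + 1, by omega⟩)
    (hadj : (q ⟨r + 2, by omega⟩ - q ⟨r, by omega⟩).natAbs = 1)
    (htail : ∀ k : Fin m, r + 3 ≤ k.val → 2 ≤ (q k - q ⟨r, by omega⟩).natAbs) :
    RFactorization K q ⟨m - 1, by omega⟩ (fun _ : Fin 2 ↦ stackPull r (by omega) q)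
      (fun _ ↦ ⟨m - 2, by omega⟩) := by
  rw [hrr] at hadj
  have horth (k : Fin m) (hk : r + 2 < k.val) :
      q ⟨r + 1, by omega⟩ ≠ q k ∧ ¬ adjZ (q ⟨r + 1, by omega⟩) (q k) := by
    have hdist := htail k hk
    rw [hrr] at hdist
    unfold adjZ
    omega
  have hfactor := KLR.rFactorization_stack_pull K q r (m - 1) (by omega) (by omega) hrr (by omega)
    (by unfold adjZ; omega) (fun k hk _ ↦ horth k hk) ⟨m - 1, by omega⟩ (by simp only; omega)
    (by simp only; omega)
  rwa [cycleIcc_inv_last_of_lt (r + 1) hm, ← stackPull_eq_comp_cycleIcc r (by omega) q hrr]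
    at hfactor

theorem stack_move_factorization_general {m : ℕ} {A : Type} [Ring A] (K : KLR ℤ adjZ m A)
    (Λ : ℤ →₀ ℕ) (q : Fin m → ℤ) (r : ℕ) (hm : r + 2 < m)
    (hrr : q ⟨r, by omega⟩ = q ⟨r + 1, by omega⟩)
    (hadj : (q ⟨r + 2, by omega⟩ - q ⟨r, by omega⟩).natAbs = 1)
    (htail : ∀ k : Fin m, r + 3 ≤ k.val → 2 ≤ (q k - q ⟨r, by omega⟩).natAbs) :
    RFactorization K q ⟨m - 1, by omega⟩
      ![stackPull r (by omega) q, stackPull r (by omega) q]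
      ![⟨m - 2, by omega⟩, ⟨m - 2, by omega⟩] ∧
    (∀ b : ℕ,
      K.x ⟨m - 2, by omega⟩ (stackPull r (by omega) q) ^ b *
          K.e (stackPull r (by omega) q) = 0 →
        K.x ⟨m - 1, by omega⟩ q ^ b * K.e q = 0) ∧
    agBound Λ (List.ofFn q) (m - 1) =
      agBound Λ ((List.ofFn q).eraseIdx (r + 1)) (m - 2) := by
  have hfactor := rFactorization_stackPull K q r hm hrr hadj htail
  refine ⟨?_, fun b hb ↦ KLR.x_pow_mul_e_eq_zero_of_rFactorization hfactor fun _ ↦ hb, ?_⟩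
  · simpa only [← Matrix.vecCons_const, Matrix.empty_eq] using hfactor
  · have hstack : (List.ofFn q).getD r 0 = (List.ofFn q).getD (r + 1) 0 := by
      rw [List.getD_eq_getElem _ _ (by rw [List.length_ofFn]; omega),
        List.getD_eq_getElem _ _ (by rw [List.length_ofFn]; omega)]
      simpa only [List.getElem_ofFn] using hrr
    rw [agBound_eraseIdx_of_stack Λ _ hstack (by omega : r < m - 2),
      show m - 2 + 1 = m - 1 by omega]

/-- Let `i = i' i_r i_r i_{r+2} i''` with `i_r · i_{r+2} = -1`
and `i_r` not adjacent (nor equal) to any entry of `i''`.  Then `i` has an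
`m`-factorization through two copies of the sequence `j = i' i_r i_{r+2} i'' i_r`;
consequently, if `x^b = 0` for the strand of `j` corresponding to the last strand
of `i`, then `x_{m,i}^b = 0` in `R_ν^Λ`; moreover the antigravity bounds of `i`
and of `i' i_r i_{r+2} i''` (which are related by a stack move) coincide. -/
theorem stack_move_factorization {m : ℕ} {A : Type} [Ring A] {Λ : ℤ →₀ ℕ}
    (K : CycKLR ℤ adjZ m A Λ) (q : Fin m → ℤ) (r : ℕ) (hm : r + 3 < m)
    (hrr : q ⟨r, by omega⟩ = q ⟨r + 1, by omega⟩)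
    (hadj : (q ⟨r + 2, by omega⟩ - q ⟨r, by omega⟩).natAbs = 1)
    (htail : ∀ k : Fin m, r + 3 ≤ k.val → 2 ≤ (q k - q ⟨r, by omega⟩).natAbs) :
    RFactorization K.toKLR q ⟨m - 1, by omega⟩
      ![stackPull r (by omega) q, stackPull r (by omega) q]
      ![⟨m - 2, by omega⟩, ⟨m - 2, by omega⟩] ∧
    (∀ b : ℕ,
      K.x ⟨m - 2, by omega⟩ (stackPull r (by omega) q) ^ b *
          K.e (stackPull r (by omega) q) = 0 →
        K.x ⟨m - 1, by omega⟩ q ^ b * K.e q = 0) ∧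
    agBound Λ (List.ofFn q) (m - 1) =
      agBound Λ ((List.ofFn q).eraseIdx (r + 1)) (m - 2) :=
  stack_move_factorization_general K.toKLR Λ q r (by omega) hrr hadj htail

end KLRPaper
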